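/- (Non-linear sewing lemma, weak formulation.) Under Hypothesis 1, there exists a family ψ = (ψ_{t,s})_{0≤s≤t≤T} of maps from V to V such that: (1) ψ has the flow property, i.e. ψ_{t,t}(a) = a and ψ_{t,s}(ψ_{s,r}(a)) = ψ_{t,r}(a) for all 0 ≤ r ≤ s ≤ t ≤ T and a ∈ V; (2) each map ψ_{t,s} : V → V is Borel measurable; (3) ψ is in the same galaxy as φ, i.e. there is a constant C such that ‖ψ_{t,s}(a) − φ_{t,s}(a)‖ ≤ C·N(a)·ϖ(ω_{s,t}) for all 0 ≤ s ≤ t ≤ T and a ∈ V. -/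

import Mathlib

open Set

noncomputable section

/-- A control: a super-additive family `ω` vanishing on the diagonal and small
near the diagonal. -/
structure IsControl (T : ℝ) (ω : ℝ → ℝ → ℝ) : Prop where
  nonneg : ∀ ⦃s t : ℝ⦄, 0 ≤ s → s ≤ t → t ≤ T → 0 ≤ ω s t
  superadd : ∀ ⦃r s t : ℝ⦄, 0 ≤ r → r ≤ s → s ≤ t → t ≤ T → ω r s + ω s t ≤ ω r t
  diag : ∀ ⦃s : ℝ⦄, 0 ≤ s → s ≤ T → ω s s = 0
  small : ∀ ε > (0:ℝ), ∃ h > (0:ℝ), ∀ ⦃s t : ℝ⦄, 0 ≤ s → s ≤ t → t ≤ T → t - s ≤ h → ω s t < ε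

/-- A remainder: a continuous increasing function `ϖ` with `2ϖ(x/2) ≤ κϖ(x)`. -/
structure IsRemainder (κ : ℝ) (ϖ : ℝ → ℝ) : Prop where
  contOn : ContinuousOn ϖ (Set.Ici 0)
  strictMonoOn : StrictMonoOn ϖ (Set.Ici 0)
  nonneg : ∀ x, 0 ≤ x → 0 ≤ ϖ x
  doubling : ∀ x, 0 < x → 2 * ϖ (x / 2) ≤ κ * ϖ x

/-- A Lipschitz almost flow on `[0,∞)` (Hypothesis 1): the Lipschitz estimate holds with
`η = 0` and a Lipschitz function `N`. -/
structure IsLipAlmostFlow {V : Type*} [NormedAddCommGroup V] (ω : ℝ → ℝ → ℝ)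
    (ϖ : ℝ → ℝ) (N : V → ℝ) (δT : ℝ) (φ : ℝ → ℝ → V → V) : Prop where
  cont : ∀ a : V, ContinuousOn (fun p : ℝ × ℝ => φ p.2 p.1 a)
    {p : ℝ × ℝ | 0 ≤ p.1 ∧ p.1 ≤ p.2}
  flow_id : ∀ ⦃t : ℝ⦄, 0 ≤ t → ∀ a, φ t t a = a
  close : ∀ ⦃s t : ℝ⦄, 0 ≤ s → s ≤ t → ∀ a, ‖φ t s a - a‖ ≤ δT * N a
  lip : ∀ ⦃s t : ℝ⦄, 0 ≤ s → s ≤ t → ∀ a b, ‖φ t s a - φ t s b‖ ≤ (1 + δT) * ‖a - b‖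
  almost : ∀ ⦃r s t : ℝ⦄, 0 ≤ r → r ≤ s → s ≤ t → ∀ a,
    ‖φ t s (φ s r a) - φ t r a‖ ≤ N a * ϖ (ω r t)

/-- The set `G^{C}_φ(r,a)` of D-solutions on `[r, r+T]` started at `(r,a)`, with
constant `C` (in the paper, `C = L_T·‖N‖_∞`). -/
def Gpaths {V : Type*} [NormedAddCommGroup V] (φ : ℝ → ℝ → V → V) (ω : ℝ → ℝ → ℝ)
    (ϖ : ℝ → ℝ) (C T r : ℝ) (a : V) : Set (ℝ → V) :=
  {y | ContinuousOn y (Set.Icc r (r + T)) ∧ y r = a ∧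
    ∀ ⦃s t : ℝ⦄, r ≤ s → s ≤ t → t ≤ r + T → ‖y t - φ t s (y s)‖ ≤ C * ϖ (ω s t)}

section Aux

/-- The simplified hypotheses that the proof uses. -/
structure SewCtx {V : Type*} [NormedAddCommGroup V] (T : ℝ) (ω : ℝ → ℝ → ℝ) (ϖ : ℝ → ℝ)
    (φ : ℝ → ℝ → V → V) (M D q L R : ℝ) : Prop where
  hT : 0 < T
  wnn : ∀ ⦃s t : ℝ⦄, 0 ≤ s → s ≤ t → t ≤ T → 0 ≤ ω s t
  wadd : ∀ ⦃r s t : ℝ⦄, 0 ≤ r → r ≤ s → s ≤ t → t ≤ T → ω r s + ω s t ≤ ω r t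
  wdiag : ∀ ⦃s : ℝ⦄, 0 ≤ s → s ≤ T → ω s s = 0
  wsmall : ∀ ε > (0:ℝ), ∃ h > (0:ℝ), ∀ ⦃s t : ℝ⦄, 0 ≤ s → s ≤ t → t ≤ T → t - s ≤ h → ω s t < ε
  pmono : ∀ x y, 0 ≤ x → x ≤ y → ϖ x ≤ ϖ y
  pzero : ϖ 0 = 0
  psmall : ∀ ε > (0:ℝ), ∃ η > (0:ℝ), ∀ x, 0 ≤ x → x < η → ϖ x < ε
  phalf : ∀ x, 0 ≤ x → (1 + D) * ϖ (x / 2) ≤ q * ϖ x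
  hD : 0 ≤ D
  hM : 0 ≤ M
  hL : 0 ≤ L
  hq : 0 ≤ q
  hq1 : q < 1
  hLq : q * L + 2 * M = L
  fid : ∀ ⦃t : ℝ⦄, 0 ≤ t → t ≤ T → ∀ a, φ t t a = a
  flip : ∀ ⦃s t : ℝ⦄, 0 ≤ s → s ≤ t → t ≤ T → ∀ a b, ‖φ t s a - φ t s b‖ ≤ D * ‖a - b‖
  falm : ∀ ⦃r s t : ℝ⦄, 0 ≤ r → r ≤ s → s ≤ t → t ≤ T → ∀ a,
    ‖φ t s (φ s r a) - φ t r a‖ ≤ M * ϖ (ω r t)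
  fclose : ∀ ⦃s t : ℝ⦄, 0 ≤ s → s ≤ t → t ≤ T → ∀ a, ‖φ t s a - a‖ ≤ R

variable {V : Type*} [NormedAddCommGroup V] {T : ℝ} {ω : ℝ → ℝ → ℝ} {ϖ : ℝ → ℝ}
    {φ : ℝ → ℝ → V → V} {M D q L R : ℝ}

namespace SewCtx

lemma pnn (h : SewCtx T ω ϖ φ M D q L R) {x : ℝ} (hx : 0 ≤ x) : 0 ≤ ϖ x := by
  have := h.pmono 0 x le_rfl hx
  rwa [h.pzero] at this

lemma wmono (h : SewCtx T ω ϖ φ M D q L R) {a b c d : ℝ} (h0 : 0 ≤ a) (hab : a ≤ b) (hbc : b ≤ c)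
    (hcd : c ≤ d) (hd : d ≤ T) : ω b c ≤ ω a d := by
  have h1 := h.wadd h0 hab (hbc.trans hcd) hd
  have h2 := h.wadd (h0.trans hab) hbc hcd hd
  have h3 := h.wnn h0 hab (by linarith)
  have h4 := h.wnn (by linarith : 0 ≤ c) hcd hd
  linarith

/-- basic triangle inequality -/
lemma tri (h : SewCtx T ω ϖ φ M D q L R) {a b c : ℝ} (h0 : 0 ≤ a) (hab : a ≤ b) (hbc : b ≤ c)
    (hc : c ≤ T) (x y z : V) :
    ‖z - φ c a x‖ ≤ ‖z - φ c b y‖ + D * ‖y - φ b a x‖ + M * ϖ (ω a c) := by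
  have e : z - φ c a x = (z - φ c b y) + (φ c b y - φ c b (φ b a x))
      + (φ c b (φ b a x) - φ c a x) := by abel
  rw [e]
  refine (norm_add₃_le).trans ?_
  have h1 := h.flip (h0.trans hab) hbc hc y (φ b a x)
  have h2 := h.falm h0 hab hbc hc x
  linarith

lemma discrete (h : SewCtx T ω ϖ φ M D q L R) (τ : ℕ → ℝ) (hτ : Monotone τ)
    (hτ0 : ∀ k, 0 ≤ τ k) (hτT : ∀ k, τ k ≤ T) (y : ℕ → V)
    (hy : ∀ k, y (k + 1) = φ (τ (k + 1)) (τ k) (y k)) :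
    ∀ n i k : ℕ, i ≤ k → k - i ≤ n → ‖y k - φ (τ k) (τ i) (y i)‖ ≤ L * ϖ (ω (τ i) (τ k)) := by
  intro n
  induction n with
  | zero =>
    intro i k hik hk
    have : k = i := by omega
    subst this
    rw [h.fid (hτ0 _) (hτT _), h.wdiag (hτ0 _) (hτT _), h.pzero]
    simp
  | succ n ih =>
    intro i k hik hk
    rcases hik.eq_or_lt with rfl | hlt
    · exact ih _ _ le_rfl (by omega)
    set W := ω (τ i) (τ k) with hW
    have hW0 : 0 ≤ W := h.wnn (hτ0 _) (hτ hik) (hτT _)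
    obtain ⟨j, hij, hjk, hj1, hj2⟩ : ∃ j, i ≤ j ∧ j < k ∧ ω (τ i) (τ j) ≤ W / 2 ∧
        ω (τ (j + 1)) (τ k) ≤ W / 2 := by
      by_contra hcon
      push Not at hcon
      have key : ∀ m, i + m < k → ω (τ i) (τ (i + m)) ≤ W / 2 := by
        intro m
        induction m with
        | zero =>
          intro _
          rw [Nat.add_zero, h.wdiag (hτ0 _) (hτT _)]; linarith
        | succ m ihm =>
          intro hm
          have h1 := hcon (i + m) (by omega) (by omega) (ihm (by omega))
          have h2 := h.wadd (hτ0 i) (hτ (show i ≤ i + m + 1 by omega))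
            (hτ (show i + m + 1 ≤ k by omega)) (hτT k)
          rw [← add_assoc]
          linarith
      have h1 := hcon (k - 1) (by omega) (by omega) (by
        have := key (k - 1 - i) (by omega)
        rwa [show i + (k - 1 - i) = k - 1 by omega] at this)
      rw [show k - 1 + 1 = k by omega, h.wdiag (hτ0 _) (hτT _)] at h1
      linarith
    have t1 := h.tri (hτ0 i) (hτ hij) (hτ hjk.le) (hτT k) (y i) (y j) (y k)
    have t2 := h.tri (hτ0 j) (hτ (Nat.le_succ j)) (hτ hjk) (hτT k) (y j) (y (j+1)) (y k)
    rw [← hy, sub_self, norm_zero, mul_zero] at t2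
    have e1 := ih i j hij (by omega)
    have e2 := ih (j+1) k hjk (by omega)
    have p1 := h.pmono _ _ (h.wnn (hτ0 i) (hτ hij) (hτT j)) hj1
    have p2 := h.pmono _ _ (h.wnn (hτ0 (j+1)) (hτ hjk) (hτT k)) hj2
    have p3 := h.pmono _ _ (h.wnn (hτ0 j) (hτ hjk.le) (hτT k))
      (h.wmono (hτ0 i) (hτ hij) (hτ hjk.le) le_rfl (hτT k))
    have p4 := h.phalf W hW0
    have e1' := e1.trans (mul_le_mul_of_nonneg_left p1 h.hL)
    have e2' := e2.trans (mul_le_mul_of_nonneg_left p2 h.hL)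
    have e1'' := mul_le_mul_of_nonneg_left e1' h.hD
    have p3' := mul_le_mul_of_nonneg_left p3 h.hM
    have p4' := mul_le_mul_of_nonneg_left p4 h.hL
    have hfin : L * ϖ W = L * (q * ϖ W) + 2 * M * ϖ W := by
      conv_lhs => rw [← h.hLq]
      ring
    rw [hfin]
    simp only [Nat.succ_eq_add_one] at *
    linarith

lemma step (h : SewCtx T ω ϖ φ M D q L R) {r : ℝ} (hr : 0 ≤ r) (y : ℝ → V) {K : ℝ} (hK : 0 ≤ K)
    (hy : ∀ s t, r ≤ s → s ≤ t → t ≤ T → ‖y t - φ t s (y s)‖ ≤ K * ϖ (ω s t)) :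
    ∀ s t, r ≤ s → s ≤ t → t ≤ T → ‖y t - φ t s (y s)‖ ≤ (q * K + 2 * M) * ϖ (ω s t) := by
  intro s t hrs hst htT
  have hs0 : 0 ≤ s := hr.trans hrs
  set W := ω s t with hW
  have hW0 : 0 ≤ W := h.wnn hs0 hst htT
  refine le_of_forall_pos_le_add fun ε hε => ?_
  obtain ⟨η, hη, hη'⟩ := h.psmall (ε / (D * K + 1)) (div_pos hε (by have := mul_nonneg h.hD hK; linarith))
  obtain ⟨d, hd, hd'⟩ := h.wsmall η hη
  let A : Set ℝ := {u | s ≤ u ∧ u ≤ t ∧ ω s u ≤ W / 2}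
  have hsA : s ∈ A := ⟨le_rfl, hst, by rw [h.wdiag hs0 (hst.trans htT)]; linarith⟩
  have hAb : BddAbove A := ⟨t, fun u hu => hu.2.1⟩
  obtain ⟨u, huA, hu⟩ := exists_lt_of_lt_csSup ⟨s, hsA⟩ (show sSup A - d / 2 < sSup A by linarith)
  obtain ⟨hsu, hut, hu2⟩ := huA
  have huS : u ≤ sSup A := le_csSup hAb ⟨hsu, hut, hu2⟩
  obtain ⟨v, huv, hvt, hvd, hv2⟩ : ∃ v, u ≤ v ∧ v ≤ t ∧ v - u ≤ d ∧ ω v t ≤ W / 2 := by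
    by_cases hc : sSup A + d / 2 ≤ t
    · refine ⟨sSup A + d / 2, by linarith, hc, by linarith, ?_⟩
      have hn : sSup A + d / 2 ∉ A := fun hmem => by
        have := le_csSup hAb hmem
        linarith
      have hgt : W / 2 < ω s (sSup A + d / 2) := by
        by_contra hcon
        exact hn ⟨by linarith, hc, not_lt.mp hcon⟩
      have := h.wadd hs0 (by linarith : s ≤ sSup A + d / 2) hc htT
      linarith
    · refine ⟨t, hut, le_rfl, by linarith, ?_⟩
      rw [h.wdiag (hs0.trans hst) htT]; linarith
  have hu0 : 0 ≤ u := hs0.trans hsu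
  have t1 := h.tri hs0 hsu hut htT (y s) (y u) (y t)
  have t2 := h.tri hu0 huv hvt htT (y u) (y v) (y t)
  have e1 := hy s u hrs hsu (hut.trans htT)
  have e2 := hy v t (by linarith) hvt htT
  have e3 := hy u v (by linarith) huv (hvt.trans htT)
  have p1 := h.pmono _ _ (h.wnn hs0 hsu (hut.trans htT)) hu2
  have p2 := h.pmono _ _ (h.wnn (hu0.trans huv) hvt htT) hv2
  have p3 := h.pmono _ _ (h.wnn hu0 hut htT) (h.wmono hs0 hsu hut le_rfl htT)
  have p4 := h.phalf W hW0
  have p5 := (hη' _ (h.wnn hu0 huv (hvt.trans htT)) (hd' hu0 huv (hvt.trans htT) hvd)).le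
  have hDK : 0 ≤ D * K := mul_nonneg h.hD hK
  have p5' : D * K * ϖ (ω u v) ≤ ε := by
    refine (mul_le_mul_of_nonneg_left p5 hDK).trans ?_
    rw [mul_div_assoc', div_le_iff₀ (by linarith)]
    nlinarith
  have e1' := mul_le_mul_of_nonneg_left (e1.trans (mul_le_mul_of_nonneg_left p1 hK)) h.hD
  have e2' := e2.trans (mul_le_mul_of_nonneg_left p2 hK)
  have e3' := mul_le_mul_of_nonneg_left e3 h.hD
  have p3' := mul_le_mul_of_nonneg_left p3 h.hM
  have p4' := mul_le_mul_of_nonneg_left p4 hK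
  linarith

lemma improve (h : SewCtx T ω ϖ φ M D q L R) {r : ℝ} (hr : 0 ≤ r) (y : ℝ → V) {K : ℝ} (hK : 0 ≤ K)
    (hy : ∀ s t, r ≤ s → s ≤ t → t ≤ T → ‖y t - φ t s (y s)‖ ≤ K * ϖ (ω s t)) :
    ∀ s t, r ≤ s → s ≤ t → t ≤ T → ‖y t - φ t s (y s)‖ ≤ L * ϖ (ω s t) := by
  have key : ∀ n : ℕ, ∀ s t, r ≤ s → s ≤ t → t ≤ T →
      ‖y t - φ t s (y s)‖ ≤ (q ^ n * K + L) * ϖ (ω s t) := by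
    intro n
    induction n with
    | zero =>
      intro s t h1 h2 h3
      refine (hy s t h1 h2 h3).trans (mul_le_mul_of_nonneg_right ?_ (h.pnn (h.wnn (hr.trans h1) h2 h3)))
      have := h.hL
      simp only [pow_zero, one_mul]; linarith
    | succ n ih =>
      have := h.step hr y (K := q ^ n * K + L)
        (add_nonneg (mul_nonneg (pow_nonneg h.hq n) hK) h.hL) ih
      intro s t h1 h2 h3
      have e : q ^ (n + 1) * K + L = q * (q ^ n * K + L) + 2 * M := by
        conv_lhs => rw [← h.hLq]
        ring
      rw [e]
      exact this s t h1 h2 h3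
  intro s t h1 h2 h3
  have hl : Filter.Tendsto (fun n : ℕ => (q ^ n * K + L) * ϖ (ω s t)) Filter.atTop
      (nhds ((0 * K + L) * ϖ (ω s t))) :=
    (((tendsto_pow_atTop_nhds_zero_of_lt_one h.hq h.hq1).mul_const K).add_const L).mul_const _
  have := ge_of_tendsto' hl (fun n => key n s t h1 h2 h3)
  simpa using this

end SewCtx

/-- Solutions on `[r,T]`, extended by zero. -/
def Sol (φ : ℝ → ℝ → V → V) (ω : ℝ → ℝ → ℝ) (ϖ : ℝ → ℝ) (L T r : ℝ) : Set (ℝ → V) :=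
  {y | (∀ t, ¬ (r ≤ t ∧ t ≤ T) → y t = 0) ∧
    ∀ s t, r ≤ s → s ≤ t → t ≤ T → ‖y t - φ t s (y s)‖ ≤ L * ϖ (ω s t)}

/-- Restriction of a path to `[s,∞)`. -/
def pres (s : ℝ) (y : ℝ → V) : ℝ → V := fun t => if s ≤ t then y t else 0

/-- Concatenation of paths at time `s`. -/
def pcat (s : ℝ) (y z : ℝ → V) : ℝ → V := fun t => if s ≤ t then z t else y t

/-- Successive lexicographic selection. -/
def Sel (φ : ℝ → ℝ → V → V) (ω : ℝ → ℝ → ℝ) (ϖ : ℝ → ℝ) (L T : ℝ) (τ : ℕ → ℝ) (f : ℕ → V → ℝ) :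
    ℕ → ℝ → Set (ℝ → V)
  | 0, r => Sol φ ω ϖ L T r
  | n + 1, r => {y | y ∈ Sel φ ω ϖ L T τ f n r ∧
      ∀ z ∈ Sel φ ω ϖ L T τ f n r, z r = y r → f n (z (τ n)) ≤ f n (y (τ n))}

namespace SewCtx

lemma sol_res {r s : ℝ} (hrs : r ≤ s) {y : ℝ → V}
    (hy : y ∈ Sol φ ω ϖ L T r) : pres s y ∈ Sol φ ω ϖ L T s := by
  refine ⟨fun t ht => ?_, fun u t h1 h2 h3 => ?_⟩
  · unfold pres
    split_ifs with hst
    · exact hy.1 t fun hc => ht ⟨hst, hc.2⟩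
    · rfl
  · simp only [pres, if_pos h1, if_pos (h1.trans h2)]
    exact hy.2 u t (hrs.trans h1) h2 h3

lemma sol_cat (h : SewCtx T ω ϖ φ M D q L R) {r s : ℝ} (hr : 0 ≤ r) (hrs : r ≤ s) (hsT : s ≤ T)
    {y z : ℝ → V} (hy : y ∈ Sol φ ω ϖ L T r) (hz : z ∈ Sol φ ω ϖ L T s) (hyz : z s = y s) :
    pcat s y z ∈ Sol φ ω ϖ L T r := by
  have hL := h.hL
  have hDL := mul_nonneg h.hD h.hL
  have hM := h.hM
  refine ⟨fun t ht => ?_, h.improve hr (K := L + D * L + M) _ (by linarith) fun u t h1 h2 h3 => ?_⟩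
  · unfold pcat
    split_ifs with hst
    · exact hz.1 t fun hc => ht ⟨hrs.trans hst, hc.2⟩
    · exact hy.1 t ht
  · have hp := h.pnn (h.wnn (hr.trans h1) h2 h3)
    by_cases hsu : s ≤ u
    · simp only [pcat, if_pos hsu, if_pos (hsu.trans h2)]
      refine (hz.2 u t hsu h2 h3).trans (mul_le_mul_of_nonneg_right (by linarith) hp)
    · by_cases hst : s ≤ t
      · simp only [pcat, if_neg hsu, if_pos hst]
        have hus : u ≤ s := (not_le.mp hsu).le
        have hu0 := hr.trans h1
        have t1 := h.tri hu0 hus hst h3 (y u) (z s) (z t)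
        have e1 := hz.2 s t le_rfl hst h3
        have e2 := hy.2 u s h1 hus hsT
        rw [← hyz] at e2
        have p1 := h.pmono _ _ (h.wnn (hu0.trans hus) hst h3) (h.wmono hu0 hus hst le_rfl h3)
        have p2 := h.pmono _ _ (h.wnn hu0 hus hsT) (h.wmono hu0 le_rfl hus hst h3)
        have e1' := e1.trans (mul_le_mul_of_nonneg_left p1 hL)
        have e2' := mul_le_mul_of_nonneg_left (e2.trans (mul_le_mul_of_nonneg_left p2 hL)) h.hD
        linarith
      · simp only [pcat, if_neg hsu, if_neg hst]
        refine (hy.2 u t h1 h2 h3).trans (mul_le_mul_of_nonneg_right (by linarith) hp)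

lemma sel_res_cat (h : SewCtx T ω ϖ φ M D q L R) (τ : ℕ → ℝ) (f : ℕ → V → ℝ) (n : ℕ) :
    (∀ r s, 0 ≤ r → r ≤ s → s ≤ T → ∀ y ∈ Sel φ ω ϖ L T τ f n r,
      pres s y ∈ Sel φ ω ϖ L T τ f n s) ∧
    (∀ r s, 0 ≤ r → r ≤ s → s ≤ T → ∀ y ∈ Sel φ ω ϖ L T τ f n r,
      ∀ z ∈ Sel φ ω ϖ L T τ f n s, z s = y s → pcat s y z ∈ Sel φ ω ϖ L T τ f n r) := by
  induction n with
  | zero =>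
    exact ⟨fun r s _ hrs _ y hy => sol_res hrs hy,
      fun r s hr hrs hsT y hy z hz e => h.sol_cat hr hrs hsT hy hz e⟩
  | succ n ih =>
    obtain ⟨ihr, ihc⟩ := ih
    constructor
    · rintro r s hr hrs hsT y ⟨hy, hmax⟩
      refine ⟨ihr r s hr hrs hsT y hy, fun z hz hzs => ?_⟩
      have hzs' : z s = y s := by simpa [pres] using hzs
      have hc := ihc r s hr hrs hsT y hy z hz hzs'
      have hcr : pcat s y z r = y r := by
        unfold pcat
        split_ifs with hsr
        · have : s = r := le_antisymm hsr hrs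
          subst this; exact hzs'
        · rfl
      have := hmax _ hc hcr
      by_cases hst : s ≤ τ n
      · simpa [pcat, pres, hst] using this
      · have hz0 : z (τ n) = 0 := by
          have : ∀ m, Sel φ ω ϖ L T τ f m s ⊆ Sol φ ω ϖ L T s := by
            intro m
            induction m with
            | zero => exact fun _ hx => hx
            | succ m ihm => exact fun _ hx => ihm hx.1
          exact (this n hz).1 _ fun hc => hst hc.1
        simp [pres, hst, hz0]
    · rintro r s hr hrs hsT y ⟨hy, hmax⟩ z ⟨hz, hzmax⟩ hzs
      refine ⟨ihc r s hr hrs hsT y hy z hz hzs, fun x hx hxr => ?_⟩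
      have hcr : pcat s y z r = y r := by
        unfold pcat
        split_ifs with hsr
        · have : s = r := le_antisymm hsr hrs
          subst this; exact hzs
        · rfl
      have h1 := hmax x hx (hxr.trans hcr)
      by_cases hst : s ≤ τ n
      · have h2 := hzmax _ (ihr r s hr hrs hsT y hy) (by simp [pres, hzs])
        simp only [pcat, pres, if_pos hst] at h2 ⊢
        exact h1.trans h2
      · simpa [pcat, hst] using h1

lemma sel_sub (τ : ℕ → ℝ) (f : ℕ → V → ℝ) (r : ℝ) (n : ℕ) :
    Sel φ ω ϖ L T τ f n r ⊆ Sol φ ω ϖ L T r := by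
  induction n with
  | zero => exact fun _ hx => hx
  | succ m ihm => exact fun _ hx => ihm hx.1

lemma cont_phi (h : SewCtx T ω ϖ φ M D q L R) {s t : ℝ} (hs : 0 ≤ s) (hst : s ≤ t) (ht : t ≤ T) :
    Continuous (φ t s) := by
  have : LipschitzWith (Real.toNNReal D) (φ t s) := by
    refine LipschitzWith.of_dist_le_mul fun a b => ?_
    rw [dist_eq_norm, dist_eq_norm, Real.coe_toNNReal _ h.hD]
    exact h.flip hs hst ht a b
  exact this.continuous

lemma sol_closed (h : SewCtx T ω ϖ φ M D q L R) {r : ℝ} (hr : 0 ≤ r) :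
    IsClosed (Sol φ ω ϖ L T r) := by
  have : Sol φ ω ϖ L T r = (⋂ t, ⋂ (_ : ¬ (r ≤ t ∧ t ≤ T)), {y : ℝ → V | y t = 0}) ∩
      ⋂ s, ⋂ t, ⋂ (_ : r ≤ s), ⋂ (_ : s ≤ t), ⋂ (_ : t ≤ T),
        {y : ℝ → V | ‖y t - φ t s (y s)‖ ≤ L * ϖ (ω s t)} := by
    ext y
    simp only [Sol, mem_inter_iff, mem_iInter, mem_ofPred_eq]
  rw [this]
  refine IsClosed.inter ?_ ?_
  · refine isClosed_iInter fun t => isClosed_iInter fun _ => ?_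
    exact isClosed_eq (continuous_apply t) continuous_const
  · refine isClosed_iInter fun s => isClosed_iInter fun t => isClosed_iInter fun h1 =>
      isClosed_iInter fun h2 => isClosed_iInter fun h3 => ?_
    have := h.cont_phi (hr.trans h1) h2 h3
    exact isClosed_le (by fun_prop) continuous_const

lemma sol_bound (h : SewCtx T ω ϖ φ M D q L R) {r : ℝ} (hr : 0 ≤ r)
    {y : ℝ → V} (hy : y ∈ Sol φ ω ϖ L T r) (t : ℝ) :
    ‖y t‖ ≤ |L * ϖ (ω r T)| + |R| + ‖y r‖ := by
  by_cases ht : r ≤ t ∧ t ≤ T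
  · have h1 := hy.2 r t le_rfl ht.1 ht.2
    have h2 := h.fclose hr ht.1 ht.2 (y r)
    have p := mul_le_mul_of_nonneg_left (h.pmono _ _ (h.wnn hr ht.1 ht.2)
      (h.wmono hr le_rfl ht.1 ht.2 le_rfl)) h.hL
    have e : y t = (y t - φ t r (y r)) + (φ t r (y r) - y r) + y r := by abel
    rw [e]
    refine norm_add₃_le.trans ?_
    have := le_abs_self (L * ϖ (ω r T))
    have := le_abs_self R
    linarith
  · rw [hy.1 t ht, norm_zero]; positivity

variable [NormedSpace ℝ V] [FiniteDimensional ℝ V]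

lemma sol_compact (h : SewCtx T ω ϖ φ M D q L R) {r : ℝ} (hr : 0 ≤ r) (ρ : ℝ) :
    IsCompact (Sol φ ω ϖ L T r ∩ {y | ‖y r‖ ≤ ρ}) := by
  have : ProperSpace V := FiniteDimensional.proper_real V
  have hbox : IsCompact (Set.pi univ fun _ : ℝ =>
      Metric.closedBall (0 : V) (|L * ϖ (ω r T)| + |R| + ρ)) :=
    isCompact_univ_pi fun _ => isCompact_closedBall _ _
  refine hbox.of_isClosed_subset ((h.sol_closed hr).inter ?_) ?_
  · exact isClosed_le (by fun_prop) continuous_const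
  · rintro y ⟨hy, hyr⟩ t -
    rw [mem_closedBall_zero_iff]
    have := h.sol_bound hr hy t
    have hyr' : ‖y r‖ ≤ ρ := hyr
    linarith

lemma exists_seq (r : ℝ) (F : Finset ℝ) (hF : ∀ x ∈ F, r ≤ x) :
    ∃ (τ : ℕ → ℝ), Monotone τ ∧ τ 0 = r ∧ (∀ x ∈ F, ∃ k, τ k = x) ∧
      (∃ n, ∀ k, n ≤ k → τ k = τ n) ∧ ∀ k, τ k = r ∨ τ k ∈ F := by
  induction F using Finset.induction_on_max with
  | empty => exact ⟨fun _ => r, monotone_const, rfl, by simp, ⟨0, by simp⟩, by simp⟩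
  | insert a F ha ih =>
    obtain ⟨τ, hm, h0, hc, ⟨n, hn⟩, hmem⟩ := ih fun x hx => hF x (Finset.mem_insert_of_mem hx)
    have hra : r ≤ a := hF a (Finset.mem_insert_self _ _)
    have hle : ∀ k, τ k ≤ a := fun k => by
      rcases hmem k with h | h
      · rw [h]; exact hra
      · exact (ha _ h).le
    refine ⟨fun k => if k ≤ n then τ k else a, ?_, by simp [h0], ?_, ⟨n + 1, ?_⟩, ?_⟩
    · intro i j hij
      dsimp only
      split_ifs with h1 h2 h2
      · exact hm hij
      · exact hle _
      · omega
      · exact le_rfl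
    · intro x hx
      rcases Finset.mem_insert.mp hx with rfl | hx
      · exact ⟨n + 1, by simp⟩
      · obtain ⟨k, hk⟩ := hc x hx
        by_cases hkn : k ≤ n
        · exact ⟨k, by simp [hkn, hk]⟩
        · exact ⟨n, by simp [← hn k (by omega), hk]⟩
    · intro k hk
      dsimp only; rw [if_neg (by omega), if_neg (by omega)]
    · intro k
      dsimp only
      split_ifs
      · rcases hmem k with h | h
        · exact Or.inl h
        · exact Or.inr (Finset.mem_insert_of_mem h)
      · exact Or.inr (Finset.mem_insert_self _ _)

lemma exists_fin (h : SewCtx T ω ϖ φ M D q L R) {r : ℝ} (hr : 0 ≤ r) (hrT : r ≤ T) (a : V)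
    (F : Finset ℝ) : ∃ y : ℝ → V, y r = a ∧ (∀ t, ¬ (r ≤ t ∧ t ≤ T) → y t = 0) ∧
      (∀ s t, s ∈ F → t ∈ F → r ≤ s → s ≤ t → t ≤ T → ‖y t - φ t s (y s)‖ ≤ L * ϖ (ω s t)) ∧
      ∀ t, ‖y t‖ ≤ |L * ϖ (ω r T)| + |R| + ‖a‖ := by
  classical
  obtain ⟨τ, hm, h0, hc, -, hmem⟩ := exists_seq r (insert r (F.filter fun x => r ≤ x ∧ x ≤ T))
    (fun x hx => by
      rcases Finset.mem_insert.mp hx with rfl | hx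
      · exact le_rfl
      · exact (Finset.mem_filter.mp hx).2.1)
  have hτr : ∀ k, r ≤ τ k := fun k => h0 ▸ hm (Nat.zero_le k)
  have hτT : ∀ k, τ k ≤ T := fun k => by
    rcases hmem k with h | h
    · rw [h]; exact hrT
    · rcases Finset.mem_insert.mp h with h | h
      · rw [h]; exact hrT
      · exact (Finset.mem_filter.mp h).2.2
  let x : ℕ → V := fun k => Nat.rec a (fun k v => φ (τ (k + 1)) (τ k) v) k
  have hx0 : x 0 = a := rfl
  have hd : ∀ i k, i ≤ k → ‖x k - φ (τ k) (τ i) (x i)‖ ≤ L * ϖ (ω (τ i) (τ k)) := fun i k hik =>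
    h.discrete τ hm (fun k => hr.trans (hτr k)) hτT x (fun k => rfl) (k - i) i k hik le_rfl
  let y : ℝ → V := fun t => if ht : ∃ k, τ k = t then x ht.choose else 0
  have hy1 : ∀ t, (∃ k, τ k = t) → ∃ k, τ k = t ∧ y t = x k := fun t ht =>
    ⟨ht.choose, ht.choose_spec, by simp only [y, dif_pos ht]⟩
  have hyr : y r = a := by
    obtain ⟨k, hk, hyk⟩ := hy1 r ⟨0, h0⟩
    have := hd 0 k (Nat.zero_le k)
    rw [hk, h0, h.wdiag hr hrT, h.pzero, mul_zero, h.fid hr hrT, hx0] at this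
    rw [hyk]
    exact sub_eq_zero.mp (norm_le_zero_iff.mp this)
  have hyd : ∀ s t, (∃ k, τ k = s) → (∃ k, τ k = t) → s ≤ t →
      ‖y t - φ t s (y s)‖ ≤ L * ϖ (ω s t) := by
    intro s t hs ht hst
    rcases hst.eq_or_lt with rfl | hlt
    · obtain ⟨k, hk⟩ := hs
      have h1 : 0 ≤ s := hk ▸ hr.trans (hτr k)
      have h2 : s ≤ T := hk ▸ hτT k
      rw [h.fid h1 h2, h.wdiag h1 h2, h.pzero]; simp
    · obtain ⟨i, hi, hyi⟩ := hy1 s hs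
      obtain ⟨k, hk, hyk⟩ := hy1 t ht
      have hik : i ≤ k := by
        by_contra hcon
        have := hm (not_le.mp hcon).le
        linarith
      have := hd i k hik
      rw [hi, hk] at this
      rwa [hyi, hyk]
  refine ⟨y, hyr, ?_, ?_, ?_⟩
  · intro t ht
    have : ¬ ∃ k, τ k = t := by
      rintro ⟨k, rfl⟩
      exact ht ⟨hτr k, hτT k⟩
    simp only [y, dif_neg this]
  · intro s t hs ht hrs hst htT
    exact hyd s t
      (hc s (Finset.mem_insert_of_mem (Finset.mem_filter.mpr ⟨hs, hrs, hst.trans htT⟩)))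
      (hc t (Finset.mem_insert_of_mem (Finset.mem_filter.mpr ⟨ht, hrs.trans hst, htT⟩))) hst
  · intro t
    by_cases hex : ∃ k, τ k = t
    · have hrt : r ≤ t := by obtain ⟨k, rfl⟩ := hex; exact hτr k
      have htT : t ≤ T := by obtain ⟨k, rfl⟩ := hex; exact hτT k
      have h1 := hyd r t ⟨0, h0⟩ hex hrt
      have h2 := h.fclose hr hrt htT (y r)
      have p := mul_le_mul_of_nonneg_left (h.pmono _ _ (h.wnn hr hrt htT)
        (h.wmono hr le_rfl hrt htT le_rfl)) h.hL
      have e : y t = (y t - φ t r (y r)) + (φ t r (y r) - y r) + a := by rw [hyr]; abel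
      rw [e]
      refine norm_add₃_le.trans ?_
      have := le_abs_self (L * ϖ (ω r T))
      have := le_abs_self R
      linarith
    · simp only [y, dif_neg hex, norm_zero]; positivity

lemma sol_nonempty (h : SewCtx T ω ϖ φ M D q L R) {r : ℝ} (hr : 0 ≤ r) (hrT : r ≤ T) (a : V) :
    ∃ y ∈ Sol φ ω ϖ L T r, y r = a := by
  classical
  have : ProperSpace V := FiniteDimensional.proper_real V
  have hbox : IsCompact (Set.pi univ fun _ : ℝ =>
      Metric.closedBall (0 : V) (|L * ϖ (ω r T)| + |R| + ‖a‖)) :=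
    isCompact_univ_pi fun _ => isCompact_closedBall _ _
  let B : Set (ℝ → V) := {y | y r = a} ∩ ⋂ t, ⋂ (_ : ¬ (r ≤ t ∧ t ≤ T)), {y : ℝ → V | y t = 0}
  have hB : IsClosed B := by
    refine IsClosed.inter (isClosed_eq (continuous_apply r) continuous_const) ?_
    refine isClosed_iInter fun t => isClosed_iInter fun _ => ?_
    exact isClosed_eq (continuous_apply t) continuous_const
  let E : ℝ × ℝ → Set (ℝ → V) := fun p =>
    ⋂ (_ : r ≤ p.1), ⋂ (_ : p.1 ≤ p.2), ⋂ (_ : p.2 ≤ T),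
        {y : ℝ → V | ‖y p.2 - φ p.2 p.1 (y p.1)‖ ≤ L * ϖ (ω p.1 p.2)}
  have hE : ∀ p, IsClosed (E p) := by
    intro p
    refine isClosed_iInter fun h1 => isClosed_iInter fun h2 => isClosed_iInter fun h3 => ?_
    have := h.cont_phi (hr.trans h1) h2 h3
    exact isClosed_le (by fun_prop) continuous_const
  obtain ⟨y, ⟨hyB, -⟩, hyE⟩ := (hbox.inter_left hB).inter_iInter_nonempty E hE (by
    intro u
    obtain ⟨y, h1, h2, h3, h4⟩ := h.exists_fin hr hrT a (u.image Prod.fst ∪ u.image Prod.snd)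
    refine ⟨y, ⟨⟨h1, ?_⟩, ?_⟩, ?_⟩
    · simp only [mem_iInter]; exact h2
    · intro t _
      rw [mem_closedBall_zero_iff]; exact h4 t
    · simp only [E, mem_iInter]
      intro p hp a1 a2 a3
      exact h3 _ _ (Finset.mem_union_left _ (Finset.mem_image_of_mem _ hp))
        (Finset.mem_union_right _ (Finset.mem_image_of_mem _ hp)) a1 a2 a3)
  have hyB2 := hyB.2
  simp only [E, mem_iInter] at hyE hyB2
  exact ⟨y, ⟨hyB2, fun s t a1 a2 a3 => hyE (s, t) a1 a2 a3⟩, hyB.1⟩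

lemma sel_compact (h : SewCtx T ω ϖ φ M D q L R) (τ : ℕ → ℝ) (f : ℕ → V → ℝ)
    (hf : ∀ n, Continuous (f n)) {r : ℝ} (hr : 0 ≤ r) (hrT : r ≤ T) (a : V) (n : ℕ) :
    IsCompact (Sel φ ω ϖ L T τ f n r ∩ {y | y r = a}) ∧
      (Sel φ ω ϖ L T τ f n r ∩ {y | y r = a}).Nonempty := by
  induction n with
  | zero =>
    constructor
    · have : Sel φ ω ϖ L T τ f 0 r ∩ {y | y r = a} =
          (Sol φ ω ϖ L T r ∩ {y | ‖y r‖ ≤ ‖a‖}) ∩ {y | y r = a} := by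
        ext y
        constructor
        · rintro ⟨h1, h2⟩
          have h2' : y r = a := h2
          exact ⟨⟨h1, by simp [h2']⟩, h2⟩
        · rintro ⟨⟨h1, -⟩, h2⟩
          exact ⟨h1, h2⟩
      rw [this]
      exact (h.sol_compact hr _).inter_right (isClosed_eq (continuous_apply r) continuous_const)
    · obtain ⟨y, h1, h2⟩ := h.sol_nonempty hr hrT a
      exact ⟨y, h1, h2⟩
  | succ n ih =>
    obtain ⟨hc, hne⟩ := ih
    have hg : Continuous fun y : ℝ → V => f n (y (τ n)) := (hf n).comp (continuous_apply _)
    obtain ⟨y, hy, hmax⟩ := hc.exists_isMaxOn hne hg.continuousOn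
    have hya : y r = a := hy.2
    have hmax' : ∀ z ∈ Sel φ ω ϖ L T τ f n r, z r = a → f n (z (τ n)) ≤ f n (y (τ n)) :=
      fun z hz hza => hmax (show z ∈ _ from ⟨hz, hza⟩)
    constructor
    · have : Sel φ ω ϖ L T τ f (n + 1) r ∩ {y | y r = a} =
          (Sel φ ω ϖ L T τ f n r ∩ {y | y r = a}) ∩ {z | f n (y (τ n)) ≤ f n (z (τ n))} := by
        ext z
        constructor
        · rintro ⟨⟨h1, h2⟩, h3⟩
          have h3' : z r = a := h3
          exact ⟨⟨h1, h3⟩, h2 y hy.1 (hya.trans h3'.symm)⟩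
        · rintro ⟨⟨h1, h3⟩, h2⟩
          have h3' : z r = a := h3
          exact ⟨⟨h1, fun x hx hxr => (hmax' x hx (hxr.trans h3')).trans h2⟩, h3⟩
      rw [this]
      exact hc.inter_right (isClosed_le continuous_const hg)
    · exact ⟨y, ⟨hy.1, fun z hz hzr => hmax' z hz (hzr.trans hya)⟩, hya⟩

lemma sel_meas [MeasurableSpace V] [BorelSpace V]
    (h : SewCtx T ω ϖ φ M D q L R) (τ : ℕ → ℝ) (f : ℕ → V → ℝ)
    (hf : ∀ n, Continuous (f n)) {r : ℝ} (hr : 0 ≤ r) (hrT : r ≤ T) (n : ℕ) :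
    ∀ F : Set (ℝ → V), IsClosed F →
      MeasurableSet {a : V | ∃ y ∈ Sel φ ω ϖ L T τ f n r, y r = a ∧ y ∈ F} := by
  induction n with
  | zero =>
    intro F hF
    have : {a : V | ∃ y ∈ Sel φ ω ϖ L T τ f 0 r, y r = a ∧ y ∈ F} =
        ⋃ k : ℕ, (fun y : ℝ → V => y r) '' ((Sol φ ω ϖ L T r ∩ {y | ‖y r‖ ≤ k}) ∩ F) := by
      ext a
      simp only [mem_ofPred_eq, mem_iUnion, mem_image]
      constructor
      · rintro ⟨y, h1, h2, h3⟩
        obtain ⟨k, hk⟩ := exists_nat_ge ‖y r‖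
        exact ⟨k, y, ⟨⟨h1, hk⟩, h3⟩, h2⟩
      · rintro ⟨k, y, ⟨⟨h1, -⟩, h3⟩, h2⟩
        exact ⟨y, h1, h2, h3⟩
    rw [this]
    refine MeasurableSet.iUnion fun k => ?_
    exact (((h.sol_compact hr k).inter_right hF).image (continuous_apply r)).isClosed.measurableSet
  | succ n ih =>
    intro F hF
    have hg : Continuous fun y : ℝ → V => f n (y (τ n)) := (hf n).comp (continuous_apply _)
    have hcl : ∀ c : ℝ, IsClosed {y : ℝ → V | c ≤ f n (y (τ n))} := fun c =>
      isClosed_le continuous_const hg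
    have : {a : V | ∃ y ∈ Sel φ ω ϖ L T τ f (n + 1) r, y r = a ∧ y ∈ F} =
        {a : V | ∃ y ∈ Sel φ ω ϖ L T τ f n r, y r = a ∧ y ∈ F} ∩
        ⋂ c : ℚ, ({a : V | ∃ y ∈ Sel φ ω ϖ L T τ f n r, y r = a ∧
            y ∈ {y : ℝ → V | (c : ℝ) ≤ f n (y (τ n))}}ᶜ ∪
          {a : V | ∃ y ∈ Sel φ ω ϖ L T τ f n r, y r = a ∧
            y ∈ F ∩ {y : ℝ → V | (c : ℝ) ≤ f n (y (τ n))}}) := by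
      ext a
      simp only [mem_inter_iff, mem_iInter, mem_union, mem_compl_iff, mem_ofPred_eq]
      constructor
      · rintro ⟨y, ⟨h1, h2⟩, h3, h4⟩
        refine ⟨⟨y, h1, h3, h4⟩, fun c => ?_⟩
        by_cases hcc : (c : ℝ) ≤ f n (y (τ n))
        · exact Or.inr ⟨y, h1, h3, h4, hcc⟩
        · refine Or.inl ?_
          rintro ⟨z, hz1, hz2, hz3⟩
          exact hcc (hz3.trans (h2 z hz1 (hz2.trans h3.symm)))
      · rintro ⟨⟨y0, h1, h2, h3⟩, hall⟩
        have hc := (h.sel_compact τ f hf hr hrT a n).1.inter_right hF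
        obtain ⟨y, hy, hmax⟩ := hc.exists_isMaxOn ⟨y0, ⟨h1, h2⟩, h3⟩ hg.continuousOn
        have hya : y r = a := hy.1.2
        refine ⟨y, ⟨hy.1.1, fun z hz hzr => ?_⟩, hya, hy.2⟩
        by_contra hcon
        obtain ⟨c, hc1, hc2⟩ := exists_rat_btwn (not_le.mp hcon)
        rcases hall c with hA | ⟨x, hx1, hx2, hx3, hx4⟩
        · exact hA ⟨z, hz, hzr.trans hya, hc2.le⟩
        · have : f n (x (τ n)) ≤ f n (y (τ n)) := hmax (show x ∈ _ from ⟨⟨hx1, hx2⟩, hx3⟩)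
          linarith
    rw [this]
    refine (ih F hF).inter (MeasurableSet.iInter fun c => ?_)
    exact (ih _ (hcl c)).compl.union (ih _ (hF.inter (hcl c)))

lemma sel_unique (h : SewCtx T ω ϖ φ M D q L R) (τ : ℕ → ℝ) (f : ℕ → V → ℝ)
    (hsep : ∀ (p : ℚ) (x x' : V), (∀ n, τ n = p → f n x = f n x') → x = x')
    {r : ℝ} (hr : 0 ≤ r) {y z : ℝ → V}
    (hy : ∀ n, y ∈ Sel φ ω ϖ L T τ f n r) (hz : ∀ n, z ∈ Sel φ ω ϖ L T τ f n r)
    (hyz : y r = z r) : y = z := by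
  have hrat : ∀ p : ℚ, y p = z p := fun p => hsep p _ _ fun n hn => by
    rw [← hn]
    exact le_antisymm ((hz (n + 1)).2 y (hy n) hyz) ((hy (n + 1)).2 z (hz n) hyz.symm)
  have hys : y ∈ Sol φ ω ϖ L T r := hy 0
  have hzs : z ∈ Sol φ ω ϖ L T r := hz 0
  funext t
  by_cases ht : r ≤ t ∧ t ≤ T
  · obtain ⟨hrt, htT⟩ := ht
    rcases hrt.eq_or_lt with rfl | hlt
    · exact hyz
    rw [← sub_eq_zero, ← norm_le_zero_iff]
    refine le_of_forall_pos_le_add fun ε hε => ?_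
    have hL := h.hL
    obtain ⟨η, hη, hη'⟩ := h.psmall (ε / (2 * L + 1)) (div_pos hε (by linarith))
    obtain ⟨d, hd, hd'⟩ := h.wsmall η hη
    obtain ⟨p, hp1, hp2⟩ := exists_rat_btwn (show max r (t - d) < t from max_lt hlt (by linarith))
    have hrp : r ≤ p := (le_max_left _ _).trans hp1.le
    have hdp : t - d ≤ p := (le_max_right _ _).trans hp1.le
    have hp0 := hr.trans hrp
    have p5 := (hη' _ (h.wnn hp0 hp2.le htT) (hd' hp0 hp2.le htT (by linarith))).le
    have e1 := hys.2 p t hrp hp2.le htT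
    have e2 := hzs.2 p t hrp hp2.le htT
    rw [hrat p] at e1
    have e : y t - z t = (y t - φ t p (z p)) - (z t - φ t p (z p)) := by abel
    have e3 := norm_sub_le (y t - φ t p (z p)) (z t - φ t p (z p))
    rw [← e] at e3
    have : 2 * L * ϖ (ω p t) ≤ ε := by
      refine (mul_le_mul_of_nonneg_left p5 (by linarith)).trans ?_
      rw [mul_div_assoc', div_le_iff₀ (by linarith)]
      nlinarith
    linarith
  · rw [hys.1 t ht, hzs.1 t ht]

lemma exists_sep (V : Type*) [NormedAddCommGroup V] [NormedSpace ℝ V] [FiniteDimensional ℝ V] :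
    ∃ (τ : ℕ → ℝ) (f : ℕ → V → ℝ), (∀ n, Continuous (f n)) ∧
      ∀ (p : ℚ) (x x' : V), (∀ n, τ n = p → f n x = f n x') → x = x' := by
  have : ProperSpace V := FiniteDimensional.proper_real V
  obtain ⟨e, he⟩ := exists_surjective_nat (ℚ × ℕ)
  let v := TopologicalSpace.denseSeq V
  refine ⟨fun n => ((e n).1 : ℝ), fun n x => ‖x - v (e n).2‖, fun n => by fun_prop, ?_⟩
  intro p x x' hx
  have h1 : ∀ k, ‖x - v k‖ = ‖x' - v k‖ := fun k => by
    obtain ⟨n, hn⟩ := he (p, k)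
    have := hx n (by simp [hn])
    simpa [hn] using this
  have h2 : (fun w : V => ‖x - w‖) = fun w => ‖x' - w‖ :=
    (TopologicalSpace.denseRange_denseSeq V).equalizer (by fun_prop) (by fun_prop)
      (funext h1)
  have h3 := congrFun h2 x
  simp only [sub_self, norm_zero] at h3
  exact (sub_eq_zero.mp (norm_eq_zero.mp h3.symm)).symm

theorem main [MeasurableSpace V] [BorelSpace V] (h : SewCtx T ω ϖ φ M D q L R) :
    ∃ ψ : ℝ → ℝ → V → V,
      (∀ ⦃t : ℝ⦄, 0 ≤ t → t ≤ T → ∀ a : V, ψ t t a = a) ∧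
      (∀ ⦃r s t : ℝ⦄, 0 ≤ r → r ≤ s → s ≤ t → t ≤ T → ∀ a : V,
        ψ t s (ψ s r a) = ψ t r a) ∧
      (∀ ⦃s t : ℝ⦄, 0 ≤ s → s ≤ t → t ≤ T → Measurable (ψ t s)) ∧
      ∀ ⦃s t : ℝ⦄, 0 ≤ s → s ≤ t → t ≤ T → ∀ a : V,
        ‖ψ t s a - φ t s a‖ ≤ L * ϖ (ω s t) := by
  obtain ⟨τ, f, hf, hsep⟩ := exists_sep V
  have hex0 : ∀ r, 0 ≤ r → r ≤ T → ∀ a : V, ∀ F : Set (ℝ → V), IsClosed F →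
      (∀ n, ∃ y ∈ Sel φ ω ϖ L T τ f n r, y r = a ∧ y ∈ F) →
      ∃ y : ℝ → V, (∀ n, y ∈ Sel φ ω ϖ L T τ f n r) ∧ y r = a ∧ y ∈ F := by
    intro r hr hrT a F hF hne
    have hc := fun n => (h.sel_compact τ f hf hr hrT a n).1.inter_right hF
    obtain ⟨y, hy⟩ := IsCompact.nonempty_iInter_of_sequence_nonempty_isCompact_isClosed
      (fun n => (Sel φ ω ϖ L T τ f n r ∩ {y | y r = a}) ∩ F)
      (fun n y hy => ⟨⟨hy.1.1.1, hy.1.2⟩, hy.2⟩)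
      (fun n => by
        obtain ⟨y, h1, h2, h3⟩ := hne n
        exact ⟨y, ⟨h1, h2⟩, h3⟩) (hc 0) (fun n => (hc n).isClosed)
    rw [mem_iInter] at hy
    exact ⟨y, fun n => (hy n).1.1, (hy 0).1.2, (hy 0).2⟩
  have hex : ∀ (r : ℝ) (a : V), ∃ y : ℝ → V, 0 ≤ r → r ≤ T →
      (∀ n, y ∈ Sel φ ω ϖ L T τ f n r) ∧ y r = a := by
    intro r a
    by_cases hr : 0 ≤ r ∧ r ≤ T
    · obtain ⟨y, h1, h2, -⟩ := hex0 r hr.1 hr.2 a univ isClosed_univ (fun n => by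
        obtain ⟨y, h1, h2⟩ := (h.sel_compact τ f hf hr.1 hr.2 a n).2
        exact ⟨y, h1, h2, trivial⟩)
      exact ⟨y, fun _ _ => ⟨h1, h2⟩⟩
    · exact ⟨0, fun h1 h2 => absurd ⟨h1, h2⟩ hr⟩
  choose Y hY using hex
  refine ⟨fun t s a => Y s a t, ?_, ?_, ?_, ?_⟩
  · intro t h0 hT a
    exact (hY t a h0 hT).2
  · intro r s t hr hrs hst htT a
    obtain ⟨h1, h2⟩ := hY r a hr (hrs.trans (hst.trans htT))
    have hs0 := hr.trans hrs
    have hsT := hst.trans htT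
    obtain ⟨h3, h4⟩ := hY s (Y r a s) hs0 hsT
    have := h.sel_unique τ f hsep hs0 h3
      (fun n => (h.sel_res_cat τ f n).1 r s hr hrs hsT _ (h1 n)) (by rw [h4]; simp [pres])
    show Y s (Y r a s) t = Y r a t
    rw [this]
    simp [pres, hst]
  · intro s t hs hst htT
    have hsT := hst.trans htT
    refine measurable_of_isClosed fun F hF => ?_
    have hcl : IsClosed {y : ℝ → V | y t ∈ F} := hF.preimage (continuous_apply t)
    have : (fun a => Y s a t) ⁻¹' F =
        ⋂ n, {a : V | ∃ y ∈ Sel φ ω ϖ L T τ f n s, y s = a ∧ y ∈ {y : ℝ → V | y t ∈ F}} := by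
      ext a
      rw [mem_iInter]
      obtain ⟨h1, h2⟩ := hY s a hs hsT
      constructor
      · intro ha n
        exact ⟨Y s a, h1 n, h2, ha⟩
      · intro ha
        obtain ⟨y, hy1, hy2, hy3⟩ := hex0 s hs hsT a _ hcl ha
        have := h.sel_unique τ f hsep hs h1 hy1 (h2.trans hy2.symm)
        show Y s a t ∈ F
        rw [this]; exact hy3
    rw [this]
    exact MeasurableSet.iInter fun n => h.sel_meas τ f hf hs hsT n _ hcl
  · intro s t hs hst htT a
    obtain ⟨h1, h2⟩ := hY s a hs (hst.trans htT)
    have h3 : Y s a ∈ Sol φ ω ϖ L T s := h1 0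
    have := h3.2 s t le_rfl hst htT
    rwa [h2] at this

end SewCtx

end Aux

/-- Theorem: the non-linear sewing lemma, weak formulation.
Under Hypothesis 1, there exists a family `ψ = (ψ_{t,s})_{0≤s≤t≤T}` of maps `V → V`
with the flow property (`ψ_{t,t} = id`, `ψ_{t,s}∘ψ_{s,r} = ψ_{t,r}`), such that every
`ψ_{t,s}` is Borel measurable and `ψ` lies in the same galaxy as `φ`:
`‖ψ_{t,s}(a) − φ_{t,s}(a)‖ ≤ C·N(a)·ϖ(ω_{s,t})` for some constant `C`. -/
theorem statement8 {V : Type*} [NormedAddCommGroup V] [NormedSpace ℝ V]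
    [FiniteDimensional ℝ V] [MeasurableSpace V] [BorelSpace V]
    (T : ℝ)
    (ω : ℝ → ℝ → ℝ) (hω : ∀ S > (0:ℝ), IsControl S ω)
    (κ : ℝ) (hκ : κ ∈ Set.Ioo (0:ℝ) 1)
    (ϖ : ℝ → ℝ) (hϖ : IsRemainder κ ϖ)
    (δ : ℝ → ℝ) (hδ0 : ∀ S, 0 ≤ δ S) (hδmono : Monotone δ)
    (hδlim : Filter.Tendsto δ (nhdsWithin 0 (Set.Ioi 0)) (nhds 0))
    (N : V → ℝ) (hN1 : ∀ a, 1 ≤ N a)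
    (CN : NNReal) (hNlip : LipschitzWith CN N)
    (hNbdd : BddAbove (Set.range N))
    (φ : ℝ → ℝ → V → V) (hφ : IsLipAlmostFlow ω ϖ N (δ T) φ)
    (hT : 0 < T) (hsmall : κ * (1 + δ T) < 1)
    (LT : ℝ) (hLT : LT = 2 / (1 - κ * (1 + δ T)))
    (Nsup : ℝ) (hNsup : Nsup = sSup (Set.range N))
    :
    ∃ ψ : ℝ → ℝ → V → V,
      (∀ ⦃t : ℝ⦄, 0 ≤ t → t ≤ T → ∀ a : V, ψ t t a = a) ∧
      (∀ ⦃r s t : ℝ⦄, 0 ≤ r → r ≤ s → s ≤ t → t ≤ T → ∀ a : V,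
        ψ t s (ψ s r a) = ψ t r a) ∧
      (∀ ⦃s t : ℝ⦄, 0 ≤ s → s ≤ t → t ≤ T → Measurable (ψ t s)) ∧
      ∃ C : ℝ, ∀ ⦃s t : ℝ⦄, 0 ≤ s → s ≤ t → t ≤ T → ∀ a : V,
        ‖ψ t s a - φ t s a‖ ≤ C * N a * ϖ (ω s t) := by
  have hd := hδ0 T
  obtain ⟨hκ0, hκ1⟩ := hκ
  have hω' := hω T hT
  have hNle : ∀ a, N a ≤ Nsup := fun a => hNsup ▸ le_csSup hNbdd ⟨a, rfl⟩
  have hNs : 1 ≤ Nsup := (hN1 0).trans (hNle 0)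
  have hq1 : 0 < 1 - κ * (1 + δ T) := by linarith
  have hmono : ∀ x y, 0 ≤ x → x ≤ y → ϖ x ≤ ϖ y := fun x y hx hxy =>
    hϖ.strictMonoOn.monotoneOn hx (hx.trans hxy : 0 ≤ y) hxy
  have hcont0 : ∀ ε > (0:ℝ), ∃ η > (0:ℝ), ∀ x, 0 ≤ x → x < η → ϖ x < ϖ 0 + ε := by
    intro ε hε
    obtain ⟨η, hη, hh⟩ := Metric.continuousOn_iff.mp hϖ.contOn 0 (by simp) ε hε
    refine ⟨η, hη, fun x hx hxη => ?_⟩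
    have := hh x hx (by rw [Real.dist_eq, sub_zero, abs_of_nonneg hx]; exact hxη)
    rw [Real.dist_eq] at this
    linarith [(abs_lt.mp this).2]
  have hzero : ϖ 0 = 0 := by
    have h0 := hϖ.nonneg 0 le_rfl
    refine le_antisymm (le_of_forall_pos_le_add fun ε hε => ?_) h0
    obtain ⟨η, hη, hh⟩ := hcont0 ε hε
    have h1 := hϖ.doubling (η / 2) (by linarith)
    have h2 := hh (η / 2) (by linarith) (by linarith)
    have h3 := hmono 0 (η / 2 / 2) le_rfl (by linarith)
    have h4 := hϖ.nonneg (η / 2) (by linarith)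
    nlinarith
  have hLT0 : 0 ≤ LT := by rw [hLT]; positivity
  have ctx : SewCtx T ω ϖ φ Nsup (1 + δ T) (κ * (1 + δ T)) (LT * Nsup) (δ T * Nsup) := by
    refine
      { hT := hT
        wnn := hω'.nonneg
        wadd := hω'.superadd
        wdiag := hω'.diag
        wsmall := hω'.small
        pmono := hmono
        pzero := hzero
        psmall := by simpa [hzero] using hcont0
        phalf := ?_
        hD := by linarith
        hM := by linarith
        hL := mul_nonneg hLT0 (by linarith)
        hq := mul_nonneg hκ0.le (by linarith)
        hq1 := hsmall
        hLq := ?_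
        fid := fun t h0 _ a => hφ.flow_id h0 a
        flip := fun s t h0 h1 _ a b => hφ.lip h0 h1 a b
        falm := ?_
        fclose := fun s t h0 h1 _ a => (hφ.close h0 h1 a).trans
          (mul_le_mul_of_nonneg_left (hNle a) hd) }
    · intro x hx
      rcases hx.eq_or_lt with rfl | hx'
      · simp [hzero]
      · have h1 := hϖ.doubling x hx'
        have h2 := hϖ.nonneg (x / 2) (by linarith)
        have h3 := mul_le_mul_of_nonneg_left h1 (by linarith : 0 ≤ 1 + δ T)
        nlinarith [mul_nonneg hd h2]
    · rw [hLT]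
      field_simp
      ring
    · intro r s t h0 h1 h2 h3 a
      exact (hφ.almost h0 h1 h2 a).trans (mul_le_mul_of_nonneg_right (hNle a)
        (hϖ.nonneg _ (hω'.nonneg h0 (h1.trans h2) h3)))
  obtain ⟨ψ, h1, h2, h3, h4⟩ := ctx.main
  refine ⟨ψ, h1, h2, h3, LT * Nsup, fun s t hs hst ht a => (h4 hs hst ht a).trans ?_⟩
  refine mul_le_mul_of_nonneg_right ?_ (hϖ.nonneg _ (hω'.nonneg hs hst ht))
  exact le_mul_of_one_le_right (mul_nonneg hLT0 (by linarith)) (hN1 a)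

end
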